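/- The orthogonal complement of ℤa₁ in the root lattice A₉ equals the ℤ-span of {a₁ + 2a₂, a₃, a₄, a₅, a₆, a₇, a₈, a₉}, and the Gram determinant of this basis equals 20. -/

import Mathlib

noncomputable section
abbrev V10 : Type := Fin 10 → ℚ

/-- The standard bilinear form on `ℚ¹⁰`. -/
def bil10 (x y : V10) : ℚ := ∑ i, x i * y i

/-- The simple roots `aᵢ = eᵢ - eᵢ₊₁` of `A₉` (here `a i` is `a_{i+1}` for `i : Fin 9`). -/
def a (i : Fin 9) : V10 :=
  fun j => if (j : ℕ) = (i : ℕ) then 1 else if (j : ℕ) = (i : ℕ) + 1 then -1 else 0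

/-- The `A₉` root lattice: integer vectors in `ℚ¹⁰` with coordinate sum zero. -/
def A9 : Submodule ℤ V10 where
  carrier := {x | (∀ i, ∃ m : ℤ, x i = (m : ℚ)) ∧ (∑ i, x i) = 0}
  add_mem' := by
    rintro x y ⟨hx1, hx2⟩ ⟨hy1, hy2⟩
    refine ⟨fun i => ?_, ?_⟩
    · obtain ⟨m, hm⟩ := hx1 i
      obtain ⟨m', hm'⟩ := hy1 i
      exact ⟨m + m', by push_cast [Pi.add_apply, hm, hm']; ring⟩
    · have : (∑ i, (x + y) i) = (∑ i, x i) + ∑ i, y i := by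
        simp [Pi.add_apply, Finset.sum_add_distrib]
      rw [this, hx2, hy2]; ring
  zero_mem' := ⟨fun i => ⟨0, by simp⟩, by simp⟩
  smul_mem' := by
    rintro c x ⟨hx1, hx2⟩
    refine ⟨fun i => ?_, ?_⟩
    · obtain ⟨m, hm⟩ := hx1 i
      refine ⟨c * m, ?_⟩
      have : (c • x) i = (c : ℚ) * x i := by simp [Pi.smul_apply, zsmul_eq_mul]
      rw [this, hm]; push_cast; ring
    · have : (∑ i, (c • x) i) = (c : ℚ) * ∑ i, x i := by
        simp [Pi.smul_apply, zsmul_eq_mul, Finset.mul_sum]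
      rw [this, hx2]; ring


/-- The basis `(a₁+2a₂, a₃, a₄, a₅, a₆, a₇, a₈, a₉)` of the orthogonal complement of `ℤa₁`
in `A₉`. -/
def bVec : Fin 8 → V10 :=
  ![a 0 + (2 : ℚ) • a 1, a 2, a 3, a 4, a 5, a 6, a 7, a 8]

/-!
A vector of coordinate sum zero is the combination of the simple roots whose coefficients are its
partial sums `s₁, s₂, …`. Orthogonality to `a₁` means that the first two coordinates agree, that is
`s₂ = 2 s₁`, so the first two terms merge into `s₁ (a₁ + 2a₂)`. The Gram matrix of
`a₁ + 2a₂, a₃, …, aₙ` is tridiagonal with lower right block the Cartan matrix of `Aₙ₋₂`, and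
expanding along its first row gives the determinant `6 (n - 1) - 4 (n - 2) = 2 (n + 1)`.
-/

section Determinant

open Matrix

variable {R : Type*} [CommRing R] {n : ℕ}

theorem det_eq_sub_of_row_col_eq_zero (M : Matrix (Fin (n + 2)) (Fin (n + 2)) R)
    (hrow : ∀ j : Fin n, M 0 j.succ.succ = 0) (hcol : ∀ i : Fin n, M i.succ.succ 0 = 0) :
    M.det = M 0 0 * (M.submatrix Fin.succ Fin.succ).det -
      M 0 1 * M 1 0 * (M.submatrix (Fin.succ ∘ Fin.succ) (Fin.succ ∘ Fin.succ)).det := by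
  have hminor : (M.submatrix Fin.succ (Fin.succAbove 1)).det =
      M 1 0 * (M.submatrix (Fin.succ ∘ Fin.succ) (Fin.succ ∘ Fin.succ)).det := by
    rw [det_succ_column_zero, Fin.sum_univ_succ]
    simp [hcol, Function.comp_def]
  rw [det_succ_row_zero, Fin.sum_univ_succ, Fin.sum_univ_succ]
  simp only [hrow, hminor, Fin.succ_zero_eq_one, Fin.succAbove_zero, Fin.val_zero, Fin.val_one,
    pow_zero, pow_one, mul_zero, zero_mul, Finset.sum_const_zero]
  ring

theorem submatrix_succ_cartanMatrix_A (n : ℕ) :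
    (CartanMatrix.A (n + 1)).submatrix Fin.succ Fin.succ = CartanMatrix.A n := by
  ext i j
  simp [CartanMatrix.A]

theorem det_cartanMatrix_A (n : ℕ) : (CartanMatrix.A n).det = n + 1 := by
  induction n using Nat.twoStepInduction with
  | zero => simp
  | one => simp [CartanMatrix.A_one]
  | more n ih₀ ih₁ =>
    have h00 : CartanMatrix.A (n + 2) 0 0 = 2 := by simp [CartanMatrix.A]
    have h01 : CartanMatrix.A (n + 2) 0 1 = -1 := by simp [CartanMatrix.A]
    have h10 : CartanMatrix.A (n + 2) 1 0 = -1 := by simp [CartanMatrix.A]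
    rw [det_eq_sub_of_row_col_eq_zero _ (by simp [CartanMatrix.A, Fin.ext_iff])
      (by simp [CartanMatrix.A]), ← submatrix_submatrix, submatrix_succ_cartanMatrix_A,
      submatrix_succ_cartanMatrix_A, ih₀, ih₁, h00, h01, h10]
    push_cast
    ring

end Determinant

section PartialSum

variable {R M : Type*} {n : ℕ}

theorem sum_partialSum_smul_sub [Ring R] [AddCommGroup M] [Module R M]
    (x : Fin (n + 1) → R) (v : Fin (n + 1) → M) :
    ∑ i : Fin n, Fin.partialSum x i.castSucc.succ • (v i.castSucc - v i.succ) =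
      ∑ j, x j • v j - (∑ j, x j) • v (Fin.last n) := by
  have hlast : Fin.partialSum x (Fin.last n).succ = ∑ j, x j := by
    rw [Fin.partialSum, List.take_of_length_le (by simp), List.sum_ofFn]
  have hcast := Fin.sum_univ_castSucc fun j ↦ Fin.partialSum x j.succ • v j
  have hsucc := Fin.sum_univ_succ fun j ↦ Fin.partialSum x j.castSucc • v j
  simp only [Fin.partialSum_zero, Fin.castSucc_zero, zero_smul, zero_add,
    Fin.castSucc_succ] at hsucc
  simp only [hlast] at hcast
  simp only [smul_sub, Finset.sum_sub_distrib, ← hsucc, eq_sub_of_add_eq hcast.symm]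
  simp only [Fin.partialSum_succ, add_smul, Finset.sum_add_distrib]
  abel

theorem partialSum_mem [AddMonoid M] {S : Type*} [SetLike S M] [AddSubmonoidClass S M] {s : S}
    {x : Fin n → M} (hx : ∀ i, x i ∈ s) (j : Fin (n + 1)) : Fin.partialSum x j ∈ s := by
  refine list_sum_mem fun y hy ↦ ?_
  obtain ⟨i, rfl⟩ := (List.mem_ofFn' _ _).1 (List.mem_of_mem_take hy)
  exact hx i

end PartialSum

section RootLattice

open Matrix

variable (R : Type*) [CommRing R] {n : ℕ}

/-- The simple root `aᵢ₊₁ = eᵢ₊₁ - eᵢ₊₂` of type `Aₙ`, with coordinates in `R` and zero-based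
indices. -/
def simpleRoot (i : Fin n) : Fin (n + 1) → R :=
  Pi.single i.castSucc 1 - Pi.single i.succ 1

/-- The root lattice of type `Aₙ`: the vectors with integer coordinates summing to zero. The
coordinates live in `R`, usually of characteristic zero, and `1 : Submodule ℤ R` is the image of
`ℤ` in it. -/
def rootLattice (n : ℕ) : Submodule ℤ (Fin (n + 1) → R) :=
  Submodule.pi Set.univ (fun _ ↦ 1) ⊓ LinearMap.ker (∑ i, LinearMap.proj i)

/-- The family `a₁ + 2a₂, a₃, …, aₙ₊₂` in the root lattice of type `Aₙ₊₂`, which spans the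
orthogonal complement of `a₁`. -/
def complementGenerator (n : ℕ) : Fin (n + 1) → Fin (n + 3) → R :=
  Fin.cons (simpleRoot R 0 + (2 : R) • simpleRoot R 1) fun i ↦ simpleRoot R i.succ.succ

variable {R}

theorem mem_rootLattice {x : Fin (n + 1) → R} :
    x ∈ rootLattice R n ↔ (∀ i, x i ∈ (1 : Submodule ℤ R)) ∧ ∑ i, x i = 0 := by
  simp [rootLattice, Submodule.mem_pi]

theorem simpleRoot_apply (i : Fin n) (j : Fin (n + 1)) :
    simpleRoot R i j = if (j : ℕ) = i then 1 else if (j : ℕ) = i + 1 then -1 else 0 := by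
  simp only [simpleRoot, Pi.sub_apply, Pi.single_apply, Fin.ext_iff, Fin.val_castSucc, Fin.val_succ]
  split_ifs <;> first | lia | simp

theorem simpleRoot_dotProduct (i : Fin n) (x : Fin (n + 1) → R) :
    simpleRoot R i ⬝ᵥ x = x i.castSucc - x i.succ := by
  simp [simpleRoot, sub_dotProduct]

theorem simpleRoot_mem_rootLattice (i : Fin n) : simpleRoot R i ∈ rootLattice R n := by
  refine mem_rootLattice.2 ⟨fun j ↦ sub_mem ?_ ?_, by simp [simpleRoot]⟩ <;>
  · rw [Pi.single_apply]
    split_ifs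
    exacts [Submodule.one_le.1 le_rfl, zero_mem _]

theorem sum_partialSum_smul_simpleRoot {x : Fin (n + 1) → R} (hx : ∑ i, x i = 0) :
    ∑ i : Fin n, Fin.partialSum x i.castSucc.succ • simpleRoot R i = x := by
  simp only [simpleRoot, sum_partialSum_smul_sub x fun j ↦ Pi.single j (1 : R), hx, zero_smul,
    sub_zero]
  exact (pi_eq_sum_univ' x).symm

theorem simpleRoot_dotProduct_simpleRoot (i j : Fin n) :
    simpleRoot R i ⬝ᵥ simpleRoot R j = CartanMatrix.A n i j := by
  simp only [simpleRoot_dotProduct, simpleRoot_apply, CartanMatrix.A, of_apply, Fin.ext_iff,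
    Fin.val_castSucc, Fin.val_succ]
  split_ifs <;> first | lia | norm_num

theorem forall_dotProduct_zsmul_simpleRoot_zero_iff {x : Fin (n + 2) → R} :
    (∀ m, (∃ c : ℤ, m = c • simpleRoot R 0) → x ⬝ᵥ m = 0) ↔ x 0 = x 1 := by
  have hzsmul (c : ℤ) : x ⬝ᵥ (c • simpleRoot R 0) = c • (x 0 - x 1) := by
    rw [dotProduct_smul, dotProduct_comm, simpleRoot_dotProduct]
    rfl
  constructor
  · intro hx
    rw [← sub_eq_zero, ← one_zsmul (x 0 - x 1), ← hzsmul]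
    exact hx _ ⟨1, rfl⟩
  · rintro hx _ ⟨c, rfl⟩
    rw [hzsmul, hx, sub_self, smul_zero]

theorem complementGenerator_mem_rootLattice (i : Fin (n + 1)) :
    complementGenerator R n i ∈ rootLattice R (n + 2) := by
  refine Fin.cases ?_ (fun i ↦ simpleRoot_mem_rootLattice _) i
  rw [complementGenerator, Fin.cons_zero, two_smul]
  exact add_mem (simpleRoot_mem_rootLattice 0)
    (add_mem (simpleRoot_mem_rootLattice 1) (simpleRoot_mem_rootLattice 1))

theorem simpleRoot_zero_dotProduct_complementGenerator (i : Fin (n + 1)) :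
    simpleRoot R 0 ⬝ᵥ complementGenerator R n i = 0 := by
  cases i using Fin.cases <;>
    simp [complementGenerator, simpleRoot_dotProduct_simpleRoot, CartanMatrix.A, Fin.ext_iff]

theorem sum_partialSum_smul_complementGenerator {x : Fin (n + 3) → R} (hx : ∑ i, x i = 0)
    (h01 : x 0 = x 1) :
    x 0 • complementGenerator R n 0 +
      ∑ i : Fin n, Fin.partialSum x i.succ.succ.castSucc.succ • complementGenerator R n i.succ =
        x := by
  have hs₁ : Fin.partialSum x 1 = x 0 := by
    rw [← Fin.succ_zero_eq_one, Fin.partialSum_succ, Fin.castSucc_zero, Fin.partialSum_zero,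
      zero_add]
  have hs₂ : Fin.partialSum x 2 = x 0 * 2 := by
    rw [← Fin.succ_one_eq_two, Fin.partialSum_succ, Fin.castSucc_one, hs₁, ← h01, mul_two]
  conv_rhs => rw [← sum_partialSum_smul_simpleRoot hx, Fin.sum_univ_succ, Fin.sum_univ_succ]
  simp [complementGenerator, hs₁, hs₂, mul_smul, add_assoc]

theorem mem_span_complementGenerator {x : Fin (n + 3) → R} (hx : x ∈ rootLattice R (n + 2))
    (h01 : x 0 = x 1) : x ∈ Submodule.span ℤ (Set.range (complementGenerator R n)) := by
  obtain ⟨hint, hsum⟩ := mem_rootLattice.1 hx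
  have smul_mem {r : R} (hr : r ∈ (1 : Submodule ℤ R)) (i : Fin (n + 1)) :
      r • complementGenerator R n i ∈ Submodule.span ℤ (Set.range (complementGenerator R n)) := by
    obtain ⟨m, rfl⟩ := Submodule.mem_one.1 hr
    rw [algebraMap_smul]
    exact Submodule.smul_mem _ _ (Submodule.subset_span ⟨i, rfl⟩)
  rw [← sum_partialSum_smul_complementGenerator hsum h01]
  exact add_mem (smul_mem (hint 0) 0) (sum_mem fun i _ ↦ smul_mem (partialSum_mem hint _) _)

theorem span_complementGenerator (n : ℕ) :
    Submodule.span ℤ (Set.range (complementGenerator R n)) =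
      rootLattice R (n + 2) ⊓ LinearMap.eqLocus (LinearMap.proj 0) (LinearMap.proj 1) := by
  refine le_antisymm (Submodule.span_le.2 ?_) fun x hx ↦ mem_span_complementGenerator hx.1 hx.2
  rintro _ ⟨i, rfl⟩
  have horth := simpleRoot_zero_dotProduct_complementGenerator (R := R) i
  rw [simpleRoot_dotProduct, sub_eq_zero] at horth
  exact ⟨complementGenerator_mem_rootLattice i, horth⟩

theorem complementGenerator_zero_dotProduct_self :
    complementGenerator R n 0 ⬝ᵥ complementGenerator R n 0 = 6 := by
  simp only [complementGenerator, Fin.cons_zero, add_dotProduct, dotProduct_add, smul_dotProduct,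
    dotProduct_smul, simpleRoot_dotProduct_simpleRoot]
  norm_num [CartanMatrix.A]

theorem complementGenerator_zero_dotProduct_succ (j : Fin n) :
    complementGenerator R n 0 ⬝ᵥ complementGenerator R n j.succ =
      if (j : ℕ) = 0 then -2 else 0 := by
  simp [complementGenerator, simpleRoot_dotProduct_simpleRoot, CartanMatrix.A, Fin.ext_iff]

theorem complementGenerator_succ_dotProduct_succ (i j : Fin n) :
    complementGenerator R n i.succ ⬝ᵥ complementGenerator R n j.succ = CartanMatrix.A n i j := by
  simp only [complementGenerator, Fin.cons_succ, simpleRoot_dotProduct_simpleRoot]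
  simp [CartanMatrix.A]

theorem det_gram_complementGenerator (n : ℕ) :
    (of fun i j ↦ complementGenerator R n i ⬝ᵥ complementGenerator R n j).det = 2 * (n + 3) := by
  set G := of fun i j ↦ complementGenerator R n i ⬝ᵥ complementGenerator R n j
  have hcorner : G 0 0 = 6 := complementGenerator_zero_dotProduct_self
  have hrow (j : Fin n) : G 0 j.succ = if (j : ℕ) = 0 then -2 else 0 :=
    complementGenerator_zero_dotProduct_succ j
  have hsymm : G.IsSymm := ext fun i j ↦
    dotProduct_comm (complementGenerator R n j) (complementGenerator R n i)
  have hcol (i : Fin n) : G i.succ 0 = if (i : ℕ) = 0 then -2 else 0 :=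
    (hsymm.apply 0 i.succ).trans (hrow i)
  have hblock : G.submatrix Fin.succ Fin.succ = (CartanMatrix.A n).map (Int.cast : ℤ → R) :=
    ext complementGenerator_succ_dotProduct_succ
  cases n with
  | zero =>
    rw [det_fin_one, hcorner]
    norm_num
  | succ n =>
    rw [det_eq_sub_of_row_col_eq_zero G (fun j ↦ by simp [hrow]) (fun i ↦ by simp [hcol]),
      ← submatrix_submatrix, hblock, submatrix_map, submatrix_succ_cartanMatrix_A,
      ← Int.cast_det, ← Int.cast_det, det_cartanMatrix_A, det_cartanMatrix_A,
      ← Fin.succ_zero_eq_one, hcorner, hrow, hcol]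
    push_cast
    simp only [Fin.val_zero, if_true]
    ring

theorem orthogonal_complement_of_a1_in_A9_general (R : Type*) [CommRing R] (n : ℕ) :
    {x | x ∈ rootLattice R (n + 2) ∧
        ∀ m, (∃ c : ℤ, m = c • simpleRoot R 0) → x ⬝ᵥ m = 0} =
      (Submodule.span ℤ (Set.range (complementGenerator R n)) : Set (Fin (n + 3) → R)) ∧
    (of fun i j ↦ complementGenerator R n i ⬝ᵥ complementGenerator R n j).det = 2 * (n + 3) := by
  refine ⟨?_, det_gram_complementGenerator n⟩
  rw [span_complementGenerator]
  ext x
  exact and_congr_right fun _ ↦ forall_dotProduct_zsmul_simpleRoot_zero_iff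

end RootLattice

theorem bil10_eq_dotProduct : bil10 = dotProduct := rfl

theorem a_eq_simpleRoot (i : Fin 9) : a i = simpleRoot ℚ i :=
  funext fun j ↦ (simpleRoot_apply i j).symm

theorem A9_eq_rootLattice : A9 = rootLattice ℚ 9 := by
  ext x
  rw [mem_rootLattice]
  simp [A9, Submodule.mem_one, eq_comm]

theorem bVec_eq_complementGenerator : bVec = complementGenerator ℚ 7 := by
  simp only [bVec, a_eq_simpleRoot]
  ext i : 1
  fin_cases i <;> rfl

theorem range_bVec :
    Set.range bVec = {a 0 + (2 : ℚ) • a 1, a 2, a 3, a 4, a 5, a 6, a 7, a 8} := by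
  simp only [bVec, Matrix.range_cons, Matrix.range_empty, Set.union_empty, Set.singleton_union]

/-- The orthogonal complement of `ℤa₁` in `A₉` is spanned by
`{a₁+2a₂, a₃, …, a₉}`, and the Gram determinant of this basis is `20`. -/
theorem orthogonal_complement_of_a1_in_A9 :
    {x : V10 | x ∈ A9 ∧ ∀ m : V10, (∃ c : ℤ, m = c • a 0) → bil10 x m = 0} =
      (Submodule.span ℤ
        ({a 0 + (2 : ℚ) • a 1, a 2, a 3, a 4, a 5, a 6, a 7, a 8} : Set V10) : Set V10) ∧
    (Matrix.of fun i j : Fin 8 => bil10 (bVec i) (bVec j)).det = 20 := by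
  rw [← range_bVec, bVec_eq_complementGenerator, A9_eq_rootLattice, a_eq_simpleRoot,
    bil10_eq_dotProduct]
  convert orthogonal_complement_of_a1_in_A9_general ℚ 7
  norm_num
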